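/- arXiv:2405.19071 — 2 statements merged into one kernel-verified Lean document; each statement's English description precedes it below -/
import Mathlib

section
/- For online bin stretching with m = 2 bins, there exist two deterministic online algorithms A₁, A₂ and a probability p ∈ [0,1] such that for every instance I, p·f(I,A₁(I)) + (1−p)·f(I,A₂(I)) ≤ 5/4. In other words, there is a 5/4-competitive randomized algorithm in the class 𝓜₂ of mixtures of two deterministic algorithms, which outperforms the optimal deterministic stretching factor of 4/3. -/
/-!
Follow one of two rules with probability `1 / 2` each; both look only at the loads of their own
bins. The two final peaks have to add up to at most `5 / 2`.

First fit with capacity `5 / 4` exceeds this capacity only if there are two items larger than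
`1 / 2` and the other items have total size strictly between `1 / 2` and `3 / 4`. The second rule
prepares for this case: from the items of size at most `1 / 2` it builds a reserved bin with load in
`[1 / 4, 1 / 2]`, puts further small items into the other bin and the first big item onto the
reserved one. Its peak then stays at least as far below `5 / 4` as first fit gets above it;
conversely, whenever the second rule exceeds `5 / 4`, first fit stays low enough. A rule whose peak
lies between `3 / 4` and `5 / 4` is out of danger: as the total size is at most `2`, its other bin
has room for every further item.
-/

open scoped BigOperators

namespace BinStretch

def Fits (m : ℕ) (I : List ℝ) : Prop :=
  ∃ σ : Fin I.length → Fin m,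
    ∀ b : Fin m, ∑ i ∈ Finset.univ.filter fun i => σ i = b, I.get i ≤ 1

def IsInstance (m : ℕ) (I : List ℝ) : Prop :=
  (∀ a ∈ I, 0 < a ∧ a ≤ 1) ∧ Fits m I

noncomputable def payoff (m : ℕ) (I : List ℝ) (D : Fin I.length → Fin m) : ℝ :=
  ⨆ b : Fin m, ∑ i ∈ Finset.univ.filter fun i => D i = b, I.get i

noncomputable def prob {m : ℕ} (A : List ℝ → PMF (Fin m)) (I : List ℝ)
    (D : Fin I.length → Fin m) : ℝ :=
  ∏ i : Fin I.length, ((A (I.take (i.1 + 1))) (D i)).toReal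

noncomputable def expPayoff (m : ℕ) (A : List ℝ → PMF (Fin m)) (I : List ℝ) : ℝ :=
  ∑ D : Fin I.length → Fin m, prob A I D * payoff m I D

def detRun {m : ℕ} (A : List ℝ → Fin m) (I : List ℝ) : Fin I.length → Fin m :=
  fun i => A (I.take (i.1 + 1))

end BinStretch

namespace BinStretch

section Rules

variable {m : ℕ}

/-- The loads after an item of size `e` has been put into bin `b`. -/
def place (v : Fin m → ℝ) (b : Fin m) (e : ℝ) : Fin m → ℝ := v + Pi.single b e

lemma sum_place (v : Fin m → ℝ) (b : Fin m) (e : ℝ) : ∑ i, place v b e i = ∑ i, v i + e := by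
  simp [place, Finset.sum_add_distrib]

lemma place_nonneg {v : Fin m → ℝ} {e : ℝ} (hv : 0 ≤ v) (he : 0 ≤ e) (b : Fin m) :
    0 ≤ place v b e :=
  add_nonneg hv (Pi.single_nonneg.2 he)

/-- A memoryless way of choosing bins: it assigns a bin to the current loads and the size of the
next item. -/
abbrev Rule (m : ℕ) : Type := (Fin m → ℝ) → ℝ → Fin m

namespace Rule

/-- The loads after the rule `c` has placed one item. -/
def next (c : Rule m) (v : Fin m → ℝ) (e : ℝ) : Fin m → ℝ := place v (c v e) e

/-- The loads after the rule `c` has placed a list of items into empty bins. -/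
def loads (c : Rule m) (I : List ℝ) : Fin m → ℝ := I.foldl c.next 0

/-- The deterministic online algorithm that follows the rule `c`. Its value on the empty list is
irrelevant. -/
def toAlgorithm (c : Rule m) (I : List ℝ) : Fin m := c (c.loads I.dropLast) (I.getLastD 0)

lemma loads_concat (c : Rule m) (I : List ℝ) (e : ℝ) :
    c.loads (I ++ [e]) = c.next (c.loads I) e := by
  simp only [loads, List.foldl_append, List.foldl_cons, List.foldl_nil]

lemma toAlgorithm_concat (c : Rule m) (I : List ℝ) (e : ℝ) :
    c.toAlgorithm (I ++ [e]) = c (c.loads I) e := by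
  simp only [toAlgorithm, List.dropLast_concat, List.getLastD_concat]

lemma sum_loads (c : Rule m) (I : List ℝ) : ∑ b, c.loads I b = I.sum := by
  induction I using List.reverseRecOn with
  | nil => simp [loads]
  | append_singleton I e ih =>
    rw [loads_concat, next, sum_place, ih, List.sum_append, List.sum_singleton]

lemma loads_nonneg (c : Rule m) {I : List ℝ} (hI : ∀ a ∈ I, 0 ≤ a) : 0 ≤ c.loads I := by
  induction I using List.reverseRecOn with
  | nil => exact le_rfl
  | append_singleton I e ih =>
    rw [loads_concat]
    exact place_nonneg (ih fun a ha => hI a (List.mem_append_left _ ha)) (hI e (by simp)) _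

end Rule

/-- The final loads of the bins when the algorithm `A` is run on `I`. -/
noncomputable def load (A : List ℝ → Fin m) (I : List ℝ) (b : Fin m) : ℝ :=
  ∑ i ∈ Finset.univ.filter fun i => detRun A I i = b, I.get i

lemma load_eq_sum_range (A : List ℝ → Fin m) (I : List ℝ) (b : Fin m) :
    load A I b =
      ∑ i ∈ Finset.range I.length, if A (I.take (i + 1)) = b then I.getD i 0 else 0 := by
  rw [load, Finset.sum_filter, Finset.sum_range]
  refine Finset.sum_congr rfl fun i _ => ?_
  rw [List.getD_eq_getElem _ _ i.2]
  rfl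

lemma load_concat (A : List ℝ → Fin m) (I : List ℝ) (e : ℝ) :
    load A (I ++ [e]) = place (load A I) (A (I ++ [e])) e := by
  funext b
  simp only [place, Pi.add_apply, load_eq_sum_range, List.length_append, List.length_singleton,
    Finset.sum_range_succ]
  congr 1
  · refine Finset.sum_congr rfl fun i hi => ?_
    have hi := Finset.mem_range.1 hi
    rw [List.take_append_of_le_length (by omega), List.getD_append _ _ _ _ hi]
  · rw [List.take_of_length_le (by simp)]
    simp [Pi.single_apply, eq_comm]

lemma load_toAlgorithm (c : Rule m) (I : List ℝ) : load c.toAlgorithm I = c.loads I := by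
  induction I using List.reverseRecOn with
  | nil => ext; simp [load, Rule.loads]
  | append_singleton I e ih =>
    rw [load_concat, ih, c.toAlgorithm_concat, c.loads_concat, Rule.next]

end Rules

lemma Fits.sum_le {m : ℕ} {I : List ℝ} (h : Fits m I) : I.sum ≤ m := by
  obtain ⟨σ, hσ⟩ := h
  calc I.sum = ∑ i, I.get i := by simp
    _ = ∑ b, ∑ i ∈ Finset.univ.filter fun i => σ i = b, I.get i :=
      (Finset.sum_fiberwise Finset.univ σ _).symm
    _ ≤ ∑ _b : Fin m, (1 : ℝ) := Finset.sum_le_sum fun b _ => hσ b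
    _ = m := by simp

/-- The number of big items, i.e. of items larger than `1 / 2`. -/
noncomputable def bigCount (I : List ℝ) : ℕ := I.countP fun a => 1 / 2 < a

lemma bigCount_concat (I : List ℝ) (e : ℝ) :
    bigCount (I ++ [e]) = bigCount I + if 1 / 2 < e then 1 else 0 := by
  simp [bigCount]

lemma bigCount_eq_card (I : List ℝ) :
    bigCount I = (Finset.univ.filter fun i => 1 / 2 < I.get i).card := by
  calc bigCount I = ((List.finRange I.length).map I.get).countP fun a => 1 / 2 < a := by
        rw [← List.ofFn_eq_map, List.ofFn_get, bigCount]
    _ = ((List.finRange I.length).filter fun i => 1 / 2 < I.get i).length := by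
        rw [List.countP_map, List.countP_eq_length_filter]
        rfl

/-- Two big items cannot share a bin of unit size. -/
lemma Fits.bigCount_le {m : ℕ} {I : List ℝ} (h : Fits m I) (hI : ∀ a ∈ I, 0 ≤ a) :
    bigCount I ≤ m := by
  obtain ⟨σ, hσ⟩ := h
  have hinj : Set.InjOn σ (Finset.univ.filter fun i => 1 / 2 < I.get i) := by
    intro i hi j hj hij
    by_contra hne
    simp only [Finset.coe_filter, Finset.mem_univ, true_and, Set.mem_ofPred_eq] at hi hj
    have hle : I.get i + I.get j ≤ 1 :=
      (Finset.add_le_sum (fun l _ => hI _ (I.get_mem l)) (by simp [hij]) (by simp) hne).trans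
        (hσ (σ j))
    linarith
  simpa [bigCount_eq_card] using Finset.card_le_card_of_injOn σ (fun _ _ => Finset.mem_univ _) hinj

section TwoBins

/-- The load of the fuller bin. -/
noncomputable def peak (v : Fin 2 → ℝ) : ℝ := max (v 0) (v 1)

lemma iSup_eq_peak (v : Fin 2 → ℝ) : ⨆ b, v b = peak v := by
  rw [peak, ← Finset.sup'_univ_eq_ciSup]
  simp [Fin.univ_succ]

lemma payoff_toAlgorithm (c : Rule 2) (I : List ℝ) :
    payoff 2 I (detRun c.toAlgorithm I) = peak (c.loads I) := by
  rw [← load_toAlgorithm, ← iSup_eq_peak]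
  rfl

variable {v w : Fin 2 → ℝ} {b : Fin 2} {e t : ℝ} {k k' : ℕ}

lemma le_peak (v : Fin 2 → ℝ) (b : Fin 2) : v b ≤ peak v := by
  fin_cases b
  exacts [le_max_left _ _, le_max_right _ _]

lemma peak_le_iff : peak v ≤ t ↔ v 0 ≤ t ∧ v 1 ≤ t := max_le_iff

lemma peak_lt_iff : peak v < t ↔ v 0 < t ∧ v 1 < t := max_lt_iff

lemma peak_le_add (hv : 0 ≤ v) : peak v ≤ v 0 + v 1 :=
  max_le (le_add_of_nonneg_right (hv 1)) (le_add_of_nonneg_left (hv 0))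

lemma Rule.next_of_eq_zero {c : Rule 2} (h : c v e = 0) :
    c.next v e 0 = v 0 + e ∧ c.next v e 1 = v 1 := by
  simp [Rule.next, place, h]

lemma Rule.next_of_eq_one {c : Rule 2} (h : c v e = 1) :
    c.next v e 0 = v 0 ∧ c.next v e 1 = v 1 + e := by
  simp [Rule.next, place, h]

lemma Rule.next_add_next (c : Rule 2) (v : Fin 2 → ℝ) (e : ℝ) :
    c.next v e 0 + c.next v e 1 = v 0 + v 1 + e := by
  simpa only [Rule.next, Fin.sum_univ_two] using sum_place v (c v e) e

lemma peak_place (he : 0 ≤ e) (v : Fin 2 → ℝ) (b : Fin 2) :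
    peak (place v b e) = max (peak v) (v b + e) := by
  fin_cases b
  · simp [peak, place, max_right_comm, he]
  · simp [peak, place, max_assoc, he]

lemma peak_le_peak_place (he : 0 ≤ e) (v : Fin 2 → ℝ) (b : Fin 2) :
    peak v ≤ peak (place v b e) :=
  (le_max_left _ _).trans_eq (peak_place he v b).symm

lemma peak_place_le_add (he : 0 ≤ e) (v : Fin 2 → ℝ) (b : Fin 2) :
    peak (place v b e) ≤ peak v + e := by
  rw [peak_place he]
  exact max_le (by linarith) (by linarith [le_peak v b])

/-- The bin with the smaller load. -/
noncomputable def lighterBin (v : Fin 2 → ℝ) : Fin 2 := if v 0 ≤ v 1 then 0 else 1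

lemma apply_lighterBin (v : Fin 2 → ℝ) : v (lighterBin v) = v 0 + v 1 - peak v := by
  unfold lighterBin peak
  split_ifs with h
  · rw [max_eq_right h]
    ring
  · rw [max_eq_left (not_le.1 h).le]
    ring

lemma lighterBin_add_le (h : e ≤ 1 / 2 ∨ 3 / 4 ≤ peak v) (ht : v 0 + v 1 + e ≤ 2) :
    v (lighterBin v) + e ≤ 5 / 4 := by
  have h0 := le_peak v 0
  have h1 := le_peak v 1
  rw [apply_lighterBin v]
  rcases h with h | h <;> linarith

/-- First fit with capacity `5 / 4`, where an item that fits nowhere goes to the lighter bin. -/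
noncomputable def firstFit : Rule 2 := fun v e =>
  if v 0 + e ≤ 5 / 4 then 0 else if v 1 + e ≤ 5 / 4 then 1 else lighterBin v

lemma firstFit_of_fits_zero (h : v 0 + e ≤ 5 / 4) : firstFit v e = 0 := if_pos h

lemma firstFit_of_fits_one (h₀ : 5 / 4 < v 0 + e) (h₁ : v 1 + e ≤ 5 / 4) : firstFit v e = 1 := by
  rw [firstFit, if_neg h₀.not_ge, if_pos h₁]

lemma firstFit_of_not_fits (h₀ : 5 / 4 < v 0 + e) (h₁ : 5 / 4 < v 1 + e) :
    firstFit v e = lighterBin v := by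
  rw [firstFit, if_neg h₀.not_ge, if_neg h₁.not_ge]

lemma firstFit_add_le_of_fits (h : v b + e ≤ 5 / 4) : v (firstFit v e) + e ≤ 5 / 4 := by
  unfold firstFit
  split_ifs with h₀ h₁
  · exact h₀
  · exact h₁
  · fin_cases b
    exacts [(h₀ h).elim, (h₁ h).elim]

lemma firstFit_add_le (h : e ≤ 1 / 2 ∨ 3 / 4 ≤ peak v) (ht : v 0 + v 1 + e ≤ 2) :
    v (firstFit v e) + e ≤ 5 / 4 :=
  firstFit_add_le_of_fits (lighterBin_add_le h ht)

/-- A load at which the rule `reserving` keeps a bin for a big item. -/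
def Reserved (t : ℝ) : Prop := t ∈ Set.Icc (1 / 4 : ℝ) (1 / 2)

open Classical in
/-- This rule prepares for two big items: it builds a reserved bin from the small items, puts the
further small items into the other bin and the first big item into the reserved one. As soon as some
load is at least `3 / 4`, it always uses the lighter bin. -/
noncomputable def reserving : Rule 2 := fun v e =>
  if 3 / 4 ≤ peak v then lighterBin v
  else if e ≤ 1 / 2 then if Reserved (v 1) ∨ v 0 + e ≤ 1 / 2 then 0 else 1
  else if Reserved (v 1) ∨ v 0 < 1 / 4 ∧ v 1 < 1 / 4 then 1 else 0

lemma reserving_of_le_peak (h : 3 / 4 ≤ peak v) (e : ℝ) : reserving v e = lighterBin v := if_pos h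

open Classical in
lemma reserving_of_small (h : peak v < 3 / 4) (he : e ≤ 1 / 2) :
    reserving v e = if Reserved (v 1) ∨ v 0 + e ≤ 1 / 2 then 0 else 1 := by
  rw [reserving, if_neg h.not_ge, if_pos he]

open Classical in
lemma reserving_of_big (h : peak v < 3 / 4) (he : 1 / 2 < e) :
    reserving v e = if Reserved (v 1) ∨ v 0 < 1 / 4 ∧ v 1 < 1 / 4 then 1 else 0 := by
  rw [reserving, if_neg h.not_ge, if_neg he.not_ge]

lemma reserving_add_le (h : e ≤ 1 / 2 ∨ 3 / 4 ≤ peak v) (ht : v 0 + v 1 + e ≤ 2) :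
    v (reserving v e) + e ≤ 5 / 4 := by
  by_cases hp : 3 / 4 ≤ peak v
  · rw [reserving_of_le_peak hp]
    exact lighterBin_add_le h ht
  · have he := h.resolve_right hp
    linarith [le_peak v (reserving v e)]

/-- From now on a rule that avoids loads above `5 / 4` where it can will never produce one: either
some bin is so full that the other one has room for the next item, or all `k = 2` big items have
been placed. -/
def Secured (k : ℕ) (v : Fin 2 → ℝ) : Prop := peak v ≤ 5 / 4 ∧ (3 / 4 ≤ peak v ∨ 2 ≤ k)

lemma Secured.place (h : Secured k v) (hk : k ≤ k') (he : 0 ≤ e) (hb : v b + e ≤ 5 / 4) :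
    Secured k' (place v b e) :=
  ⟨(peak_place he v b).trans_le (max_le h.1 hb),
    h.2.imp (fun hp => hp.trans (peak_le_peak_place he v b)) hk.trans'⟩

lemma add_lt_of_reserved (hw : peak w < 3 / 4) (hres : Reserved (w 0) ∨ Reserved (w 1)) :
    w 0 + w 1 < 5 / 4 := by
  obtain ⟨hw₀, hw₁⟩ := peak_lt_iff.1 hw
  rcases hres with h | h <;> linarith [h.2]

lemma reserved_reserving_next (hw : peak w < 3 / 4) (hres : Reserved (w 0) ∨ Reserved (w 1))
    (he : 0 ≤ e) (he' : e ≤ 1 / 2) :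
    Reserved (reserving.next w e 0) ∨ Reserved (reserving.next w e 1) := by
  by_cases h : Reserved (w 1) ∨ w 0 + e ≤ 1 / 2
  · have hb : reserving w e = 0 := by rw [reserving_of_small hw he', if_pos h]
    obtain ⟨h₀, h₁⟩ := Rule.next_of_eq_zero hb
    rw [h₀, h₁]
    by_cases hres₁ : Reserved (w 1)
    · exact .inr hres₁
    · have hres₀ := hres.resolve_right hres₁
      exact .inl ⟨by linarith [hres₀.1], h.resolve_left hres₁⟩
  · have hb : reserving w e = 1 := by rw [reserving_of_small hw he', if_neg h]
    rw [(Rule.next_of_eq_one hb).1]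
    exact .inl (hres.resolve_right (not_or.1 h).1)

lemma reserved_apply_reserving (hw : peak w < 3 / 4) (hres : Reserved (w 0) ∨ Reserved (w 1))
    (he : 1 / 2 < e) : Reserved (w (reserving w e)) := by
  rw [reserving_of_big hw he]
  split_ifs with h
  · exact h.resolve_right fun h' => by rcases hres with hr | hr <;> linarith [hr.1]
  · exact hres.resolve_right (not_or.1 h).1

lemma secured_firstFit_next (hv₀ : v 0 ≤ 5 / 4) (hv₁ : v 1 = 0) (he : 0 ≤ e) (he' : e ≤ 1 / 2)
    (hve : 3 / 4 ≤ v 0 + e) : Secured k (firstFit.next v e) := by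
  have hv : peak v ≤ 5 / 4 := peak_le_iff.2 ⟨hv₀, by linarith⟩
  have hfit : v (firstFit v e) + e ≤ 5 / 4 := firstFit_add_le_of_fits (b := 1) (by linarith)
  rw [Secured, Rule.next, peak_place he]
  refine ⟨max_le hv hfit, .inl ?_⟩
  by_cases h₀ : v 0 + e ≤ 5 / 4
  · rw [firstFit_of_fits_zero h₀]
    exact le_max_of_le_right hve
  · exact le_max_of_le_left ((by linarith : 3 / 4 ≤ v 0).trans (le_peak v 0))

/-- The joint configurations of the loads `v` under `firstFit` and `w` under `reserving` that can
occur after some items, `k` of which were big. -/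
inductive Invariant : ℕ → (Fin 2 → ℝ) → (Fin 2 → ℝ) → Prop
  | start {v w : Fin 2 → ℝ} (hv : v 1 = 0) (hw₀ : w 0 < 1 / 4) (hw₁ : w 1 = 0) : Invariant 0 v w
  | reserved {v w : Fin 2 → ℝ} (hv : v 1 = 0) (hw : peak w < 3 / 4)
      (hres : Reserved (w 0) ∨ Reserved (w 1)) : Invariant 0 v w
  /-- The first big item came before any bin was reserved. -/
  | early {v w : Fin 2 → ℝ} (hv : v 1 = 0) (hw₀ : w 0 ≤ 1 / 2)
      (hw₁ : w 1 ∈ Set.Ioo (1 / 2) (3 / 4)) : Invariant 1 v w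
  | secured {k : ℕ} {v w : Fin 2 → ℝ} (hv : Secured k v) (hw : Secured k w) : Invariant k v w
  /-- The load `v 1` is a big item that did not fit into bin `0`, and `reserving` has put this item
  onto its reserved bin. -/
  | critical {v w : Fin 2 → ℝ} (hv : peak v < 3 / 4) (hv' : 5 / 4 < v 0 + v 1)
      (hw : peak w ∈ Set.Icc (v 1 + 1 / 4) (v 1 + 1 / 2)) : Invariant 1 v w
  | firstFitOver {k : ℕ} {v w : Fin 2 → ℝ} (hv : 5 / 4 < peak v)
      (hvw : peak v + peak w ≤ v 0 + v 1 + 1 / 2) : Invariant k v w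
  | reservingOver {k : ℕ} {v w : Fin 2 → ℝ} (hv : v 1 ≤ 1) (hw : 5 / 4 < peak w)
      (hvw : peak w ≤ v 1 + 1 / 2) : Invariant k v w

namespace Invariant

lemma peak_add_peak_le (h : Invariant k v w) (hvw : v 0 + v 1 = w 0 + w 1) (ht : v 0 + v 1 ≤ 2) :
    peak v + peak w ≤ 5 / 2 := by
  suffices ∃ t, peak v ≤ t ∧ peak w ≤ 5 / 2 - t by
    obtain ⟨t, hv, hw⟩ := this
    linarith
  cases h with
  | start hv hw₀ hw₁ =>
    exact ⟨5 / 4, peak_le_iff.2 ⟨by linarith, by linarith⟩,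
      peak_le_iff.2 ⟨by linarith, by linarith⟩⟩
  | reserved hv hw hres =>
    obtain ⟨h₀, h₁⟩ := peak_lt_iff.1 hw
    refine ⟨5 / 4, peak_le_iff.2 ⟨?_, by linarith⟩, by linarith⟩
    rcases hres with hr | hr <;> linarith [hr.2]
  | early hv hw₀ hw₁ =>
    have := hw₁.2
    exact ⟨5 / 4, peak_le_iff.2 ⟨by linarith, by linarith⟩,
      peak_le_iff.2 ⟨by linarith, by linarith⟩⟩
  | secured hv hw => exact ⟨5 / 4, hv.1, by linarith [hw.1]⟩
  | critical hv hv' hw => exact ⟨3 / 4, hv.le, by linarith [le_peak v 1, hw.2]⟩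
  | firstFitOver hv hvw => exact ⟨peak v, le_rfl, by linarith⟩
  | reservingOver hv hw hvw =>
    exact ⟨5 / 2 - peak w, peak_le_iff.2 ⟨by linarith, by linarith⟩, by linarith⟩

lemma next_secured (hv : Secured k v) (hw : Secured k w) (he : 0 ≤ e) (hk : k ≤ k')
    (hroom : e ≤ 1 / 2 ∨ k < 2) (htv : v 0 + v 1 + e ≤ 2) (htw : w 0 + w 1 + e ≤ 2) :
    Invariant k' (firstFit.next v e) (reserving.next w e) :=
  .secured
    (hv.place hk he (firstFit_add_le (hroom.imp_right fun h => hv.2.resolve_right h.not_ge) htv))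
    (hw.place hk he (reserving_add_le (hroom.imp_right fun h => hw.2.resolve_right h.not_ge) htw))

lemma next_firstFitOver (hv : 5 / 4 < peak v) (hvw : peak v + peak w ≤ v 0 + v 1 + 1 / 2)
    (he : 0 ≤ e) (ht : v 0 + v 1 + e ≤ 2) :
    Invariant k (firstFit.next v e) (reserving.next w e) := by
  have hfit : v (firstFit v e) + e ≤ 5 / 4 := firstFit_add_le (.inr (by linarith)) ht
  have hv' : peak (firstFit.next v e) = peak v := by
    rw [Rule.next, peak_place he, max_eq_left (by linarith)]
  have hw' : peak (reserving.next w e) ≤ peak w + e := peak_place_le_add he w _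
  have hsum := firstFit.next_add_next v e
  exact .firstFitOver (by linarith) (by linarith)

lemma next_reservingOver (hv : v 1 ≤ 1) (hw : 5 / 4 < peak w) (hvw : peak w ≤ v 1 + 1 / 2)
    (he : 0 ≤ e) (htv : v 0 + v 1 + e ≤ 2) (htw : w 0 + w 1 + e ≤ 2) :
    Invariant k (firstFit.next v e) (reserving.next w e) := by
  have hfit : w (reserving w e) + e ≤ 5 / 4 := reserving_add_le (.inr (by linarith)) htw
  have hw' : peak (reserving.next w e) = peak w := by
    rw [Rule.next, peak_place he, max_eq_left (by linarith)]
  have hv' : firstFit.next v e 1 = v 1 :=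
    (Rule.next_of_eq_zero (firstFit_of_fits_zero (by linarith))).2
  exact .reservingOver (hv'.trans_le hv) (by linarith) (by linarith)

/-- When an item no longer fits, the peak of `firstFit` becomes the total size minus the larger of
its old loads. The bounds on `peak w` keep `reserving` within `1 / 2` of that load. -/
lemma next_critical (hv : peak v < 3 / 4) (hv' : 5 / 4 < v 0 + v 1)
    (hw : peak w ∈ Set.Icc (v 1 + 1 / 4) (v 1 + 1 / 2)) (he : 0 ≤ e)
    (hvw : v 0 + v 1 = w 0 + w 1) (ht : v 0 + v 1 + e ≤ 2) (hk : e ≤ 1 / 2 → k = 1) :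
    Invariant k (firstFit.next v e) (reserving.next w e) := by
  obtain ⟨hv₀, hv₁⟩ := peak_lt_iff.1 hv
  obtain ⟨hw₁, hw₂⟩ := hw
  have hsum := firstFit.next_add_next v e
  have hw' : peak (reserving.next w e) = max (peak w) (w 0 + w 1 - peak w + e) := by
    rw [Rule.next, peak_place he, reserving_of_le_peak (by linarith), apply_lighterBin w]
  by_cases hfit : ∃ b, v b + e ≤ 5 / 4
  · obtain ⟨b, hb⟩ := hfit
    have hv' : peak (firstFit.next v e) ≤ 5 / 4 :=
      (peak_place he v _).trans_le (max_le (by linarith) (firstFit_add_le_of_fits hb))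
    rcases le_or_gt (3 / 4) (peak (firstFit.next v e)) with hhigh | hlow
    · refine .secured ⟨hv', .inl hhigh⟩ ?_
      rw [Secured, hw']
      exact ⟨max_le (by linarith) (by linarith), .inl (le_max_of_le_left (by linarith))⟩
    · obtain ⟨hlow₀, hlow₁⟩ := peak_lt_iff.1 hlow
      obtain rfl := hk (by linarith)
      have hnext₁ : firstFit.next v e 1 = v 1 :=
        (Rule.next_of_eq_zero (firstFit_of_fits_zero (by linarith))).2
      rw [max_eq_left (by linarith)] at hw'
      exact .critical hlow (by linarith) ⟨by linarith, by linarith⟩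
  · push Not at hfit
    have hlighter := hfit (lighterBin v)
    have hnext : peak (firstFit.next v e) = v 0 + v 1 - peak v + e := by
      rw [Rule.next, firstFit_of_not_fits (hfit 0) (hfit 1), peak_place he,
        max_eq_right (by linarith), apply_lighterBin v]
    rw [apply_lighterBin v] at hlighter
    have hw'' : peak (reserving.next w e) ≤ peak v + 1 / 2 := by
      have := le_peak v 0
      have := le_peak v 1
      exact hw'.trans_le (max_le (by linarith) (by linarith))
    exact .firstFitOver (by linarith) (by linarith)

lemma next_start_of_small (hv : v 1 = 0) (hw₀ : w 0 < 1 / 4) (hw₁ : w 1 = 0) (he' : e ≤ 1 / 2)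
    (hvw : v 0 + v 1 = w 0 + w 1) :
    Invariant 0 (firstFit.next v e) (reserving.next w e) := by
  have hlow : peak w < 3 / 4 := peak_lt_iff.2 ⟨by linarith, by linarith⟩
  have hres : ¬ Reserved (w 1) := fun h => by linarith [h.1]
  have hv₁ : firstFit.next v e 1 = 0 :=
    (Rule.next_of_eq_zero (firstFit_of_fits_zero (by linarith))).2.trans hv
  by_cases hwe : w 0 + e ≤ 1 / 2
  · have hb : reserving w e = 0 := by rw [reserving_of_small hlow he', if_pos (.inr hwe)]
    obtain ⟨h₀, h₁⟩ := Rule.next_of_eq_zero hb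
    rcases lt_or_ge (w 0 + e) (1 / 4) with hlt | hge
    · exact .start hv₁ (by linarith) (by linarith)
    · exact .reserved hv₁ (peak_lt_iff.2 ⟨by linarith, by linarith⟩)
        (.inl ⟨by linarith, by linarith⟩)
  · have hb : reserving w e = 1 := by
      rw [reserving_of_small hlow he', if_neg (not_or.2 ⟨hres, hwe⟩)]
    obtain ⟨h₀, h₁⟩ := Rule.next_of_eq_one hb
    exact .reserved hv₁ (peak_lt_iff.2 ⟨by linarith, by linarith⟩)
      (.inr ⟨by linarith, by linarith⟩)

lemma next_start_of_big (hv : v 1 = 0) (hw₀ : w 0 < 1 / 4) (hw₁ : w 1 = 0) (hw : 0 ≤ w)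
    (he : 1 / 2 < e) (he' : e ≤ 1) (hvw : v 0 + v 1 = w 0 + w 1) :
    Invariant 1 (firstFit.next v e) (reserving.next w e) := by
  have hw0 : 0 ≤ w 0 := hw 0
  have hlow : peak w < 3 / 4 := peak_lt_iff.2 ⟨by linarith, by linarith⟩
  have hfit : firstFit v e = 0 := firstFit_of_fits_zero (by linarith)
  obtain ⟨hv₀', hv₁'⟩ := Rule.next_of_eq_zero hfit
  have hb : reserving w e = 1 := by
    rw [reserving_of_big hlow he, if_pos (.inr ⟨hw₀, by linarith⟩)]
  obtain ⟨hw₀', hw₁'⟩ := Rule.next_of_eq_one hb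
  rcases lt_or_ge e (3 / 4) with hlt | hge
  · exact .early (by linarith) (by linarith) ⟨by linarith, by linarith⟩
  · have := le_peak (firstFit.next v e) 0
    have := le_peak (reserving.next w e) 1
    exact .secured ⟨peak_le_iff.2 ⟨by linarith, by linarith⟩, .inl (by linarith)⟩
      ⟨peak_le_iff.2 ⟨by linarith, by linarith⟩, .inl (by linarith)⟩

lemma next_reserved_of_small (hv : v 1 = 0) (hw : peak w < 3 / 4)
    (hres : Reserved (w 0) ∨ Reserved (w 1)) (hw0 : 0 ≤ w) (he : 0 ≤ e) (he' : e ≤ 1 / 2)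
    (hvw : v 0 + v 1 = w 0 + w 1) :
    Invariant 0 (firstFit.next v e) (reserving.next w e) := by
  have hres' := reserved_reserving_next hw hres he he'
  have hsum := reserving.next_add_next w e
  have hlt := add_lt_of_reserved hw hres
  rcases lt_or_ge (peak (reserving.next w e)) (3 / 4) with hlow | hhigh
  · have hlt' := add_lt_of_reserved hlow hres'
    have hb : firstFit v e = 0 := firstFit_of_fits_zero (by linarith)
    exact .reserved ((Rule.next_of_eq_zero hb).2.trans hv) hlow hres'
  · have hw' : peak (reserving.next w e) ≤ peak w + e := peak_place_le_add he w _
    have hle := peak_le_add (place_nonneg hw0 he (reserving w e))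
    rw [← Rule.next] at hle
    exact .secured (secured_firstFit_next (by linarith) hv he he' (by linarith))
      ⟨by linarith, .inl hhigh⟩

lemma next_reserved_of_big (hv : v 1 = 0) (hw : peak w < 3 / 4)
    (hres : Reserved (w 0) ∨ Reserved (w 1)) (hw0 : 0 ≤ w) (he : 1 / 2 < e) (he' : e ≤ 1)
    (hvw : v 0 + v 1 = w 0 + w 1) :
    Invariant 1 (firstFit.next v e) (reserving.next w e) := by
  obtain ⟨hr₁, hr₂⟩ := reserved_apply_reserving hw hres he
  have hlt := add_lt_of_reserved hw hres
  have hle : w (reserving w e) ≤ w 0 + w 1 := (le_peak w _).trans (peak_le_add hw0)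
  have hw' : peak (reserving.next w e) = w (reserving w e) + e := by
    rw [Rule.next, peak_place (by linarith), max_eq_right (by linarith)]
  by_cases hfit : v 0 + e ≤ 5 / 4
  · obtain ⟨h₀, h₁⟩ := Rule.next_of_eq_zero (firstFit_of_fits_zero hfit)
    have := le_peak (firstFit.next v e) 0
    exact .secured ⟨peak_le_iff.2 ⟨by linarith, by linarith⟩, .inl (by linarith)⟩
      ⟨by linarith, .inl (by linarith)⟩
  obtain ⟨h₀, h₁⟩ := Rule.next_of_eq_one (firstFit_of_fits_one (not_le.1 hfit) (by linarith))
  rcases lt_or_ge (5 / 4) (w (reserving w e) + e) with hover | hle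
  · exact .reservingOver (by linarith) (by linarith) (by linarith)
  rcases lt_or_ge (peak (firstFit.next v e)) (3 / 4) with hlow | hhigh
  · exact .critical hlow (by linarith) ⟨by linarith, by linarith⟩
  · exact .secured ⟨peak_le_iff.2 ⟨by linarith, by linarith⟩, .inl hhigh⟩
      ⟨by linarith, .inl (by linarith)⟩

lemma next_early_of_small (hv : v 1 = 0) (hw₀ : w 0 ≤ 1 / 2)
    (hw₁ : w 1 ∈ Set.Ioo (1 / 2) (3 / 4)) (he : 0 ≤ e) (he' : e ≤ 1 / 2)
    (hvw : v 0 + v 1 = w 0 + w 1) :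
    Invariant 1 (firstFit.next v e) (reserving.next w e) := by
  obtain ⟨hw₁, hw₂⟩ := hw₁
  have hlow : peak w < 3 / 4 := peak_lt_iff.2 ⟨by linarith, hw₂⟩
  have hres : ¬ Reserved (w 1) := fun h => by linarith [h.2]
  by_cases hwe : w 0 + e ≤ 1 / 2
  · have hb : reserving w e = 0 := by rw [reserving_of_small hlow he', if_pos (.inr hwe)]
    obtain ⟨h₀, h₁⟩ := Rule.next_of_eq_zero hb
    have hfit : firstFit v e = 0 := firstFit_of_fits_zero (by linarith)
    exact .early ((Rule.next_of_eq_zero hfit).2.trans hv) (by linarith) ⟨by linarith, by linarith⟩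
  have hb : reserving w e = 1 := by
    rw [reserving_of_small hlow he', if_neg (not_or.2 ⟨hres, hwe⟩)]
  obtain ⟨h₀, h₁⟩ := Rule.next_of_eq_one hb
  rcases lt_or_ge (w 1 + e) (3 / 4) with hlt | hge
  · have hfit : firstFit v e = 0 := firstFit_of_fits_zero (by linarith)
    exact .early ((Rule.next_of_eq_zero hfit).2.trans hv) (by linarith) ⟨by linarith, by linarith⟩
  · have := le_peak (reserving.next w e) 1
    exact .secured (secured_firstFit_next (by linarith) hv he he' (by linarith))
      ⟨peak_le_iff.2 ⟨by linarith, by linarith⟩, .inl (by linarith)⟩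

lemma next_early_of_big (hv : v 1 = 0) (hw₀ : w 0 ≤ 1 / 2)
    (hw₁ : w 1 ∈ Set.Ioo (1 / 2) (3 / 4)) (he : 1 / 2 < e) (he' : e ≤ 1)
    (hvw : v 0 + v 1 = w 0 + w 1) :
    Invariant 2 (firstFit.next v e) (reserving.next w e) := by
  obtain ⟨hw₁, hw₂⟩ := hw₁
  have hlow : peak w < 3 / 4 := peak_lt_iff.2 ⟨by linarith, hw₂⟩
  have hb : reserving w e = 0 := by
    rw [reserving_of_big hlow he, if_neg]
    rintro (h | h) <;> linarith [h.2]
  obtain ⟨hw₀', hw₁'⟩ := Rule.next_of_eq_zero hb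
  by_cases hfit : v 0 + e ≤ 5 / 4
  · obtain ⟨h₀, h₁⟩ := Rule.next_of_eq_zero (firstFit_of_fits_zero hfit)
    exact .secured ⟨peak_le_iff.2 ⟨by linarith, by linarith⟩, .inr le_rfl⟩
      ⟨peak_le_iff.2 ⟨by linarith, by linarith⟩, .inr le_rfl⟩
  obtain ⟨h₀, h₁⟩ := Rule.next_of_eq_one (firstFit_of_fits_one (not_le.1 hfit) (by linarith))
  rcases lt_or_ge (5 / 4) (w 0 + e) with hover | hle
  · have hpeak : peak (reserving.next w e) = w 0 + e := by
      rw [Rule.next, peak_place (by linarith), hb, max_eq_right (by linarith)]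
    exact .reservingOver (by linarith) (by linarith) (by linarith)
  · exact .secured ⟨peak_le_iff.2 ⟨by linarith, by linarith⟩, .inr le_rfl⟩
      ⟨peak_le_iff.2 ⟨by linarith, by linarith⟩, .inr le_rfl⟩

lemma next_of_small (h : Invariant k v w) (hw : 0 ≤ w) (he : 0 ≤ e) (he' : e ≤ 1 / 2)
    (hvw : v 0 + v 1 = w 0 + w 1) (ht : v 0 + v 1 + e ≤ 2) :
    Invariant k (firstFit.next v e) (reserving.next w e) := by
  cases h with
  | start hv hw₀ hw₁ => exact next_start_of_small hv hw₀ hw₁ he' hvw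
  | reserved hv hlow hres => exact next_reserved_of_small hv hlow hres hw he he' hvw
  | early hv hw₀ hw₁ => exact next_early_of_small hv hw₀ hw₁ he he' hvw
  | secured hsv hsw => exact next_secured hsv hsw he le_rfl (.inl he') ht (by linarith)
  | critical hv hv' hw' => exact next_critical hv hv' hw' he hvw ht fun _ => rfl
  | firstFitOver hv hpeak => exact next_firstFitOver hv hpeak he ht
  | reservingOver hv hw' hpeak => exact next_reservingOver hv hw' hpeak he ht (by linarith)

lemma next_of_big (h : Invariant k v w) (hk : k < 2) (hw : 0 ≤ w) (he : 1 / 2 < e) (he' : e ≤ 1)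
    (hvw : v 0 + v 1 = w 0 + w 1) (ht : v 0 + v 1 + e ≤ 2) :
    Invariant (k + 1) (firstFit.next v e) (reserving.next w e) := by
  have he0 : 0 ≤ e := by linarith
  cases h with
  | start hv hw₀ hw₁ => exact next_start_of_big hv hw₀ hw₁ hw he he' hvw
  | reserved hv hlow hres => exact next_reserved_of_big hv hlow hres hw he he' hvw
  | early hv hw₀ hw₁ => exact next_early_of_big hv hw₀ hw₁ he he' hvw
  | secured hsv hsw => exact next_secured hsv hsw he0 (Nat.le_succ k) (.inr hk) ht (by linarith)
  | critical hv hv' hw' => exact next_critical hv hv' hw' he0 hvw ht fun h => absurd h he.not_ge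
  | firstFitOver hv hpeak => exact next_firstFitOver hv hpeak he0 ht
  | reservingOver hv hw' hpeak => exact next_reservingOver hv hw' hpeak he0 ht (by linarith)

end Invariant

lemma loads_zero_add_loads_one (c : Rule 2) (I : List ℝ) : c.loads I 0 + c.loads I 1 = I.sum := by
  rw [← Fin.sum_univ_two, c.sum_loads]

theorem invariant_loads {I : List ℝ} (hI : ∀ a ∈ I, 0 ≤ a ∧ a ≤ 1) (ht : I.sum ≤ 2)
    (hbig : bigCount I ≤ 2) :
    Invariant (bigCount I) (firstFit.loads I) (reserving.loads I) := by
  induction I using List.reverseRecOn with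
  | nil => exact .start rfl (by simp [Rule.loads]) rfl
  | append_singleton I e ih =>
    have hI' : ∀ a ∈ I, 0 ≤ a ∧ a ≤ 1 := fun a ha => hI a (List.mem_append_left _ ha)
    obtain ⟨he, he'⟩ := hI e (by simp)
    rw [List.sum_append, List.sum_singleton] at ht
    rw [bigCount_concat] at hbig ⊢
    have hinv := ih hI' (by linarith) (le_self_add.trans hbig)
    have hw : 0 ≤ reserving.loads I := reserving.loads_nonneg fun a ha => (hI' a ha).1
    have hv_sum := loads_zero_add_loads_one firstFit I
    have hw_sum := loads_zero_add_loads_one reserving I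
    rw [Rule.loads_concat, Rule.loads_concat]
    split_ifs at hbig ⊢ with hb
    · exact hinv.next_of_big (by omega) hw hb he' (by linarith) (by linarith)
    · exact hinv.next_of_small hw he (not_lt.1 hb) (by linarith) (by linarith)

end TwoBins

end BinStretch

open BinStretch in
theorem exists_M2_algorithm_five_fourths_general :
    ∃ (A₁ A₂ : List ℝ → Fin 2) (p : ℝ), 0 ≤ p ∧ p ≤ 1 ∧
      ∀ I : List ℝ, (∀ a ∈ I, 0 ≤ a ∧ a ≤ 1) → I.sum ≤ 2 → bigCount I ≤ 2 →
        p * payoff 2 I (detRun A₁ I) + (1 - p) * payoff 2 I (detRun A₂ I) ≤ (5 : ℝ) / 4 := by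
  refine ⟨firstFit.toAlgorithm, reserving.toAlgorithm, 1 / 2, by norm_num, by norm_num, ?_⟩
  intro I hI ht hbig
  have hv_sum := loads_zero_add_loads_one firstFit I
  have hw_sum := loads_zero_add_loads_one reserving I
  have hpeak := (invariant_loads hI ht hbig).peak_add_peak_le (by linarith) (by linarith)
  rw [payoff_toAlgorithm, payoff_toAlgorithm]
  linarith

theorem exists_M2_algorithm_five_fourths :
    ∃ (A₁ A₂ : List ℝ → Fin 2) (p : ℝ), 0 ≤ p ∧ p ≤ 1 ∧
      ∀ I : List ℝ, BinStretch.IsInstance 2 I →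
        p * BinStretch.payoff 2 I (BinStretch.detRun A₁ I)
          + (1 - p) * BinStretch.payoff 2 I (BinStretch.detRun A₂ I) ≤ (5 : ℝ) / 4 := by
  obtain ⟨A₁, A₂, p, hp₀, hp₁, h⟩ := exists_M2_algorithm_five_fourths_general
  exact ⟨A₁, A₂, p, hp₀, hp₁, fun I ⟨hI, hfit⟩ => h I (fun a ha => ⟨(hI a ha).1.le, (hI a ha).2⟩)
    (by simpa using hfit.sum_le) (hfit.bigCount_le fun a ha => (hI a ha).1.le)⟩
end

section
/- Fix m ≥ 1. The sequence (v_{2^k}(m))_{k∈ℕ} is nondecreasing, bounded above by v*(m), and converges to v*(m); equivalently, sup over k ∈ ℕ of v_{2^k}(m) equals v*(m). That is, the lower bounds obtained by restricting the adversary to item sizes that are integer multiples of 1/2^k converge to the optimal worst-case expected performance of randomized online algorithms for online bin stretching. -/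
/-!
Since `v_g ≤ v*` for every grid, it suffices to turn near-optimal algorithms `B_g` for the grids
`1/g` into one algorithm that is good on all instances. Let `B_g` play a list after rounding its
items down to multiples of `1/g`, and let `A` be the limit of these algorithms along an ultrafilter
on `ℕ`: for each item list the distributions lie in a compact simplex, and the expected payoff on a
fixed instance is a polynomial in finitely many of their entries. A fixed instance has finitely many
items, so for large `g` it rounds to an instance on the grid, while the total rounding error tends
to `0`. Hence `A` pays at most `lim v_g` on it. This bounds `v*` by every ultrafilter limit of
`v_g`, which forces `v_g → v*` along all `g`.
-/

open scoped BigOperators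

namespace BinStretch

/-- Instances all of whose item sizes are integer multiples of `1/g`. -/
def InstanceG (m g : ℕ) (I : List ℝ) : Prop :=
  IsInstance m I ∧ ∀ a ∈ I, ∃ x : ℕ, a = (x : ℝ) / g

/-- Optimal worst-case expected payoff of randomized algorithms against
adversaries restricted to item sizes that are multiples of `1/g`. -/
noncomputable def vg (m g : ℕ) : ℝ :=
  ⨅ A : List ℝ → PMF (Fin m),
    ⨆ I : {I : List ℝ // InstanceG m g I}, expPayoff m A I.1

/-- Optimal worst-case expected payoff of randomized algorithms. -/
noncomputable def vstar (m : ℕ) : ℝ :=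
  ⨅ A : List ℝ → PMF (Fin m),
    ⨆ I : {I : List ℝ // IsInstance m I}, expPayoff m A I.1

end BinStretch

namespace BinStretch

open Filter Topology

/-! ### Limits of behavioral algorithms -/

lemma sum_toReal_pmf {α : Type*} [Fintype α] (p : PMF α) : ∑ a, (p a).toReal = 1 := by
  rw [← ENNReal.toReal_sum fun a _ => p.apply_ne_top a, ← tsum_fintype (L := .unconditional _),
    p.tsum_coe, ENNReal.toReal_one]

lemma exists_pmf_tendsto_toReal {ι α : Type*} [Finite α] (U : Ultrafilter ι) (p : ι → PMF α) :
    ∃ q : PMF α, ∀ a, Tendsto (fun k => (p k a).toReal) U (𝓝 (q a).toReal) := by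
  have := Fintype.ofFinite α
  have hp (k : ι) : (fun a => (p k a).toReal) ∈ stdSimplex ℝ α :=
    ⟨fun _ => ENNReal.toReal_nonneg, sum_toReal_pmf _⟩
  obtain ⟨q, ⟨hq_nonneg, hq_sum⟩, hq⟩ := (isCompact_stdSimplex ℝ α).ultrafilter_le_nhds'
    (U.map fun k a => (p k a).toReal) (Ultrafilter.mem_map.2 (univ_mem' hp))
  refine ⟨PMF.ofFintype (fun a => ENNReal.ofReal (q a)) ?_, fun a => ?_⟩
  · rw [← ENNReal.ofReal_sum_of_nonneg fun a _ => hq_nonneg a, hq_sum, ENNReal.ofReal_one]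
  · rw [PMF.ofFintype_apply, ENNReal.toReal_ofReal (hq_nonneg a)]
    exact tendsto_pi_nhds.1 (show Tendsto (fun k a => (p k a).toReal) U (𝓝 q) from hq) a

variable {m : ℕ} {I : List ℝ}

lemma exists_limit_algorithm {ι : Type*} (U : Ultrafilter ι) (B : ι → List ℝ → PMF (Fin m)) :
    ∃ A : List ℝ → PMF (Fin m), ∀ I,
      Tendsto (fun k => expPayoff m (B k) I) U (𝓝 (expPayoff m A I)) := by
  choose A hA using fun L => exists_pmf_tendsto_toReal U fun k => B k L
  exact ⟨A, fun I => tendsto_finsetSum _ fun D _ =>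
    (tendsto_finsetProd _ fun i _ => hA _ (D i)).mul_const _⟩

/-! ### Bounds on the expected payoff -/

lemma prob_nonneg (A : List ℝ → PMF (Fin m)) (I : List ℝ) (D : Fin I.length → Fin m) :
    0 ≤ prob A I D :=
  Finset.prod_nonneg fun _ _ => ENNReal.toReal_nonneg

lemma sum_prob (A : List ℝ → PMF (Fin m)) (I : List ℝ) : ∑ D, prob A I D = 1 :=
  calc ∑ D, prob A I D
      = ∏ i : Fin I.length, ∑ b, (A (I.take (i + 1)) b).toReal :=
        (Fintype.prod_sum fun (i : Fin I.length) b => (A (I.take (i + 1)) b).toReal).symm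
    _ = 1 := Finset.prod_eq_one fun _ _ => sum_toReal_pmf _

lemma sum_prob_mul_le (A : List ℝ → PMF (Fin m)) {x y : (Fin I.length → Fin m) → ℝ} {c : ℝ}
    (h : ∀ D, x D ≤ y D + c) : ∑ D, prob A I D * x D ≤ ∑ D, prob A I D * y D + c :=
  calc ∑ D, prob A I D * x D
      ≤ ∑ D, prob A I D * (y D + c) :=
        Finset.sum_le_sum fun D _ => mul_le_mul_of_nonneg_left (h D) (prob_nonneg A I D)
    _ = ∑ D, prob A I D * y D + c := by
        simp only [mul_add, Finset.sum_add_distrib, ← Finset.sum_mul, sum_prob, one_mul]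

lemma Fits.sum_get_le (hI : Fits m I) : ∑ i, I.get i ≤ m := by
  obtain ⟨σ, hσ⟩ := hI
  calc ∑ i, I.get i
      = ∑ b, ∑ i ∈ Finset.univ.filter (fun i => σ i = b), I.get i :=
        (Finset.sum_fiberwise _ _ _).symm
    _ ≤ ∑ _b : Fin m, (1 : ℝ) := Finset.sum_le_sum fun b _ => hσ b
    _ = m := by simp

lemma payoff_le_sum_get (hI : ∀ a ∈ I, 0 ≤ a) (D : Fin I.length → Fin m) :
    payoff m I D ≤ ∑ i, I.get i :=
  Real.iSup_le
    (fun _ => Finset.sum_le_univ_sum_of_nonneg fun i => hI _ (I.get_mem i))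
    (Finset.sum_nonneg fun i _ => hI _ (I.get_mem i))

lemma payoff_nonneg (hI : ∀ a ∈ I, 0 ≤ a) (D : Fin I.length → Fin m) : 0 ≤ payoff m I D :=
  Real.iSup_nonneg fun _ => Finset.sum_nonneg fun i _ => hI _ (I.get_mem i)

lemma IsInstance.nonneg (hI : IsInstance m I) : ∀ a ∈ I, 0 ≤ a :=
  fun a ha => (hI.1 a ha).1.le

lemma IsInstance.expPayoff_nonneg (hI : IsInstance m I) (A : List ℝ → PMF (Fin m)) :
    0 ≤ expPayoff m A I :=
  Finset.sum_nonneg fun D _ => mul_nonneg (prob_nonneg A I D) (payoff_nonneg hI.nonneg D)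

lemma IsInstance.expPayoff_le (hI : IsInstance m I) (A : List ℝ → PMF (Fin m)) :
    expPayoff m A I ≤ m := by
  have hpayoff (D : Fin I.length → Fin m) : payoff m I D ≤ 0 + m :=
    (payoff_le_sum_get hI.nonneg D).trans (hI.2.sum_get_le.trans_eq (zero_add _).symm)
  simpa only [expPayoff, mul_zero, Finset.sum_const_zero, zero_add] using
    sum_prob_mul_le A hpayoff

/-! ### The value of the game against a class of instances -/

/-- Optimal worst-case expected payoff of randomized algorithms against the instances satisfying
`P`. Both `vg m g` and `vstar m` are of this form, definitionally. -/
noncomputable def value (m : ℕ) (P : List ℝ → Prop) : ℝ :=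
  ⨅ A : List ℝ → PMF (Fin m), ⨆ I : {I : List ℝ // P I}, expPayoff m A I.1

variable {P Q : List ℝ → Prop}

lemma value_nonneg (hP : ∀ I, P I → IsInstance m I) : 0 ≤ value m P :=
  Real.iInf_nonneg fun A => Real.iSup_nonneg fun I => (hP _ I.2).expPayoff_nonneg A

lemma value_le (hP : ∀ I, P I → IsInstance m I) {A : List ℝ → PMF (Fin m)} {v : ℝ} (hv : 0 ≤ v)
    (hA : ∀ I, P I → expPayoff m A I ≤ v) : value m P ≤ v := by
  have hbdd : BddBelow (Set.range fun A : List ℝ → PMF (Fin m) =>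
      ⨆ I : {I : List ℝ // P I}, expPayoff m A I.1) :=
    ⟨0, Set.forall_mem_range.2 fun A =>
      Real.iSup_nonneg fun I => (hP _ I.2).expPayoff_nonneg A⟩
  exact (ciInf_le hbdd A).trans (Real.iSup_le (fun I => hA _ I.2) hv)

lemma exists_expPayoff_le_of_value_lt [NeZero m] (hP : ∀ I, P I → IsInstance m I) {v : ℝ}
    (hv : value m P < v) : ∃ A : List ℝ → PMF (Fin m), ∀ I, P I → expPayoff m A I ≤ v := by
  obtain ⟨A, hA⟩ := exists_lt_of_ciInf_lt hv
  have hbdd : BddAbove (Set.range fun I : {I : List ℝ // P I} => expPayoff m A I.1) :=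
    ⟨m, Set.forall_mem_range.2 fun I => (hP _ I.2).expPayoff_le A⟩
  exact ⟨A, fun I hI => (le_ciSup hbdd ⟨I, hI⟩).trans hA.le⟩

lemma value_mono [NeZero m] (hQ : ∀ I, Q I → IsInstance m I) (hPQ : ∀ I, P I → Q I) :
    value m P ≤ value m Q := by
  refine le_of_forall_gt_imp_ge_of_dense fun v hv => ?_
  obtain ⟨A, hA⟩ := exists_expPayoff_le_of_value_lt hQ hv
  exact value_le (fun I hI => hQ I (hPQ I hI)) ((value_nonneg hQ).trans hv.le)
    fun I hI => hA I (hPQ I hI)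

lemma InstanceG.of_dvd {g h : ℕ} (hh : h ≠ 0) (hgh : g ∣ h) (hI : InstanceG m g I) :
    InstanceG m h I := by
  refine ⟨hI.1, fun a ha => ?_⟩
  obtain ⟨x, rfl⟩ := hI.2 a ha
  obtain ⟨d, rfl⟩ := hgh
  have hd : (d : ℝ) ≠ 0 := Nat.cast_ne_zero.2 (right_ne_zero_of_mul hh)
  exact ⟨x * d, by push_cast; exact (mul_div_mul_right _ _ hd).symm⟩

lemma vg_nonneg (m g : ℕ) : 0 ≤ vg m g :=
  value_nonneg fun _ hI => hI.1

lemma vg_le_vg_of_dvd [NeZero m] {g h : ℕ} (hh : h ≠ 0) (hgh : g ∣ h) : vg m g ≤ vg m h :=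
  value_mono (fun _ hI => hI.1) fun _ hI => hI.of_dvd hh hgh

lemma vg_le_vstar [NeZero m] (g : ℕ) : vg m g ≤ vstar m :=
  value_mono (fun _ hI => hI) fun _ hI => hI.1

/-! ### Rounding items down -/

-- Stating both facts over `Fin n` avoids transporting decisions between the index types
-- `Fin I.length` and `Fin (I.map r).length`.
lemma fits_iff_of_length_eq {n : ℕ} (hn : I.length = n) :
    Fits m I ↔ ∃ σ : Fin n → Fin m,
      ∀ b, ∑ i ∈ Finset.univ.filter (fun i => σ i = b), I.get (i.cast hn.symm) ≤ 1 := by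
  subst hn; rfl

lemma expPayoff_eq_of_length_eq {n : ℕ} (hn : I.length = n) (A : List ℝ → PMF (Fin m)) :
    expPayoff m A I = ∑ D : Fin n → Fin m, (∏ i : Fin n, (A (I.take (i + 1)) (D i)).toReal) *
      ⨆ b, ∑ i ∈ Finset.univ.filter (fun i => D i = b), I.get (i.cast hn.symm) := by
  subst hn; rfl

lemma get_map_cast (r : ℝ → ℝ) (I : List ℝ) (i : Fin I.length) :
    (I.map r).get (i.cast (List.length_map r).symm) = r (I.get i) := by
  simp

variable {r : ℝ → ℝ}

lemma IsInstance.map (hI : IsInstance m I) (hpos : ∀ a ∈ I, 0 < r a) (hle : ∀ a ∈ I, r a ≤ a) :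
    IsInstance m (I.map r) := by
  obtain ⟨hsize, σ, hσ⟩ := hI
  refine ⟨List.forall_mem_map.2 fun a ha => ⟨hpos a ha, (hle a ha).trans (hsize a ha).2⟩,
    (fits_iff_of_length_eq (List.length_map r)).2 ⟨σ, fun b => ?_⟩⟩
  simp only [get_map_cast]
  exact (Finset.sum_le_sum fun i _ => hle _ (I.get_mem i)).trans (hσ b)

lemma expPayoff_comp_map_le [NeZero m] (A : List ℝ → PMF (Fin m)) (hr : ∀ a ∈ I, r a ≤ a) :
    expPayoff m (fun L => A (L.map r)) I
      ≤ expPayoff m A (I.map r) + ∑ i, (I.get i - r (I.get i)) := by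
  have hpayoff (D : Fin I.length → Fin m) : payoff m I D
      ≤ (⨆ b, ∑ i ∈ Finset.univ.filter (fun i => D i = b), r (I.get i))
        + ∑ i, (I.get i - r (I.get i)) := by
    refine ciSup_le fun b => ?_
    have hload := Finite.le_ciSup
      (fun b => ∑ i ∈ Finset.univ.filter (fun i => D i = b), r (I.get i)) b
    have herror : ∑ i ∈ Finset.univ.filter (fun i => D i = b), (I.get i - r (I.get i))
        ≤ ∑ i, (I.get i - r (I.get i)) :=
      Finset.sum_le_univ_sum_of_nonneg fun i => sub_nonneg.2 (hr _ (I.get_mem i))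
    rw [Finset.sum_sub_distrib] at herror
    linarith
  have hmap := expPayoff_eq_of_length_eq (List.length_map (as := I) r) A
  simp only [get_map_cast, ← List.map_take] at hmap
  rw [hmap]
  exact sum_prob_mul_le _ hpayoff

/-- The largest multiple of `1/g` that is at most `a`, for `0 ≤ a` and `g ≠ 0`. -/
noncomputable def roundDown (g : ℕ) (a : ℝ) : ℝ :=
  (⌊a * g⌋₊ : ℝ) / g

lemma roundDown_le (g : ℕ) {a : ℝ} (ha : 0 ≤ a) : roundDown g a ≤ a :=
  div_le_of_le_mul₀ g.cast_nonneg ha (Nat.floor_le (by positivity))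

lemma tendsto_roundDown {a : ℝ} (ha : 0 ≤ a) :
    Tendsto (fun g => roundDown g a) atTop (𝓝 a) :=
  (tendsto_nat_floor_mul_div_atTop ha).comp tendsto_natCast_atTop_atTop

lemma IsInstance.eventually_instanceG_map_roundDown (hI : IsInstance m I) :
    ∀ᶠ g in atTop, InstanceG m g (I.map (roundDown g)) := by
  have hpos : ∀ᶠ g in atTop, ∀ a ∈ I, 0 < roundDown g a :=
    (eventually_all_finite I.finite_toSet).2 fun a ha =>
      (tendsto_roundDown (hI.nonneg a ha)).eventually_const_lt (hI.1 a ha).1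
  filter_upwards [hpos] with g hg
  exact ⟨hI.map hg fun a ha => roundDown_le g (hI.nonneg a ha),
    List.forall_mem_map.2 fun a _ => ⟨⌊a * g⌋₊, rfl⟩⟩

lemma tendsto_sum_sub_roundDown (hI : ∀ a ∈ I, 0 ≤ a) :
    Tendsto (fun g => ∑ i, (I.get i - roundDown g (I.get i))) atTop (𝓝 0) := by
  have hterm (i : Fin I.length) :
      Tendsto (fun g => I.get i - roundDown g (I.get i)) atTop (𝓝 0) := by
    simpa only [sub_self] using (tendsto_roundDown (hI _ (I.get_mem i))).const_sub (I.get i)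
  simpa only [Finset.sum_const_zero] using tendsto_finsetSum Finset.univ fun i _ => hterm i

/-! ### Convergence of the values -/

lemma exists_expPayoff_le_of_tendsto_vg [NeZero m] {U : Ultrafilter ℕ}
    (hU : (U : Filter ℕ) ≤ atTop) {v : ℝ} (hv : Tendsto (vg m) U (𝓝 v)) :
    ∃ A : List ℝ → PMF (Fin m), ∀ I, IsInstance m I → expPayoff m A I ≤ v := by
  have hnear (g : ℕ) : ∃ A : List ℝ → PMF (Fin m),
      ∀ I, InstanceG m g I → expPayoff m A I ≤ vg m g + 1 / ((g : ℝ) + 1) :=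
    exists_expPayoff_le_of_value_lt (fun _ hI => hI.1)
      (lt_add_of_pos_right (vg m g) Nat.one_div_pos_of_nat)
  choose B hB using hnear
  obtain ⟨A, hA⟩ := exists_limit_algorithm U fun g L => B g (L.map (roundDown g))
  refine ⟨A, fun I hI => ?_⟩
  have hbound : Tendsto (fun g => vg m g + 1 / ((g : ℝ) + 1)
      + ∑ i, (I.get i - roundDown g (I.get i))) U (𝓝 v) := by
    simpa only [add_zero] using (hv.add (tendsto_one_div_add_atTop_nhds_zero_nat.mono_left hU)).add
      ((tendsto_sum_sub_roundDown hI.nonneg).mono_left hU)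
  refine le_of_tendsto_of_tendsto (hA I) hbound (hU ?_)
  filter_upwards [hI.eventually_instanceG_map_roundDown] with g hg
  exact (expPayoff_comp_map_le (B g) fun a ha => roundDown_le g (hI.nonneg a ha)).trans
    (by gcongr; exact hB g _ hg)

theorem tendsto_vg_vstar (m : ℕ) [NeZero m] : Tendsto (vg m) atTop (𝓝 (vstar m)) := by
  refine (tendsto_iff_ultrafilter _ _ _).2 fun U hU => ?_
  have hmem (g : ℕ) : vg m g ∈ Set.Icc 0 (vstar m) := ⟨vg_nonneg m g, vg_le_vstar g⟩
  obtain ⟨v, ⟨hv_nonneg, hv_le⟩, hv⟩ := isCompact_Icc.ultrafilter_le_nhds' (U.map (vg m))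
    (Ultrafilter.mem_map.2 (univ_mem' hmem))
  obtain ⟨A, hA⟩ := exists_expPayoff_le_of_tendsto_vg hU hv
  have hle_v : vstar m ≤ v := value_le (fun _ hI => hI) hv_nonneg hA
  rwa [hle_v.antisymm hv_le]

end BinStretch

open BinStretch Filter in
theorem dyadic_lower_bounds_converge_general (m : ℕ) (hm : 1 ≤ m) {g : ℕ → ℕ}
    (hdvd : ∀ ⦃k l⦄, k ≤ l → g k ∣ g l) (hg : Tendsto g atTop atTop) :
    Monotone (fun k => vg m (g k)) ∧ (∀ k, vg m (g k) ≤ vstar m) ∧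
    Tendsto (fun k => vg m (g k)) atTop (nhds (vstar m)) ∧ (⨆ k, vg m (g k)) = vstar m := by
  have : NeZero m := NeZero.of_pos hm
  have hg_ne_zero (l : ℕ) : g l ≠ 0 := by
    obtain ⟨n, hln, hn⟩ := ((eventually_ge_atTop l).and (hg.eventually_gt_atTop 0)).exists
    exact ne_zero_of_dvd_ne_zero hn.ne' (hdvd hln)
  have hmono : Monotone fun k => vg m (g k) :=
    fun k l hkl => vg_le_vg_of_dvd (hg_ne_zero l) (hdvd hkl)
  have hlim := (tendsto_vg_vstar m).comp hg
  exact ⟨hmono, fun k => vg_le_vstar (g k), hlim, (isLUB_of_tendsto_atTop hmono hlim).ciSup_eq⟩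

theorem dyadic_lower_bounds_converge (m : ℕ) (hm : 1 ≤ m) :
    Monotone (fun k : ℕ => BinStretch.vg m (2 ^ k)) ∧
    (∀ k : ℕ, BinStretch.vg m (2 ^ k) ≤ BinStretch.vstar m) ∧
    Filter.Tendsto (fun k : ℕ => BinStretch.vg m (2 ^ k)) Filter.atTop
      (nhds (BinStretch.vstar m)) ∧
    (⨆ k : ℕ, BinStretch.vg m (2 ^ k)) = BinStretch.vstar m := by
  exact dyadic_lower_bounds_converge_general m hm (fun _ _ => pow_dvd_pow 2)
    (tendsto_pow_atTop_atTop_of_one_lt one_lt_two)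
end
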